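/- arXiv:1003.5615 — 2 statements merged into one kernel-verified Lean document; each statement's English description precedes it below -/
import Mathlib

section
/- Let n ≥ 2 be an integer and σ ∈ ℝ. The complex-valued function w(z) := √(1−z) · ₂F₁(n/2 + iσ, n/2 − iσ, n/2; z) satisfies the radial hypergeometric equation E(n, −σ²) on the interval (−1, 0); moreover w(z) is real for every z ∈ (−1, 0). -/
open Real Set Complex

/-- A complex-valued function `w` of a real variable satisfies the radial hypergeometric
equation `E(n, τ)` on the set `I`:
`z(1−z)w'' + (n/2 − nz)w' − (((n−1)/4)(n−1+1/(1−z)) − τ)w = 0` on `I`. -/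
def SatisfiesRadialHGC (n : ℕ) (τ : ℂ) (w : ℝ → ℂ) (I : Set ℝ) : Prop :=
  ∀ z ∈ I, (z : ℂ) * (1 - z) * deriv (deriv w) z + ((n : ℂ) / 2 - n * z) * deriv w z
    - (((n : ℂ) - 1) / 4 * ((n : ℂ) - 1 + 1 / (1 - (z : ℂ))) - τ) * w z = 0

/-!
Comparing coefficients, Gauss's equation `z(1−z)f'' + (c − (a+b+1)z)f' − abf = 0` says
`(m + 1) (c + m) u (m + 1) = (a + m) (b + m) u m`, which the coefficients of `₂F₁ a b c` satisfy.
For `a + b = n` and `c = n/2`, the substitution `w = √(1−z) f` turns Gauss's equation into `E(n, τ)`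
with `τ = n²/4 − ab`. When `d²` is real, conjugation fixes or exchanges the parameters `n/2 ± d`,
and `₂F₁` is symmetric in them, so `w` is real.
-/

section PowerSeries

lemma hasSum_mul_pow_of_succ {R : Type*} [CommRing R] [TopologicalSpace R] [IsTopologicalRing R]
    {u : ℕ → R} {z S : R} (h : HasSum (fun m => u (m + 1) * z ^ m) S) :
    HasSum (fun m => u m * z ^ m) (u 0 + z * S) := by
  have hshift : HasSum (fun m => u (m + 1) * z ^ (m + 1)) (z * S) := by
    simpa only [pow_succ', mul_left_comm] using h.mul_left z
  simpa only [pow_zero, mul_one] using HasSum.zero_add (f := fun m => u m * z ^ m) hshift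

variable {𝕜 : Type*} [NontriviallyNormedField 𝕜] {u : ℕ → 𝕜} {f : 𝕜 → 𝕜} {r : ENNReal}

lemma hasSum_of_hasFPowerSeriesOnBall_ofScalars
    (hf : HasFPowerSeriesOnBall f (FormalMultilinearSeries.ofScalars 𝕜 u) 0 r)
    {z : 𝕜} (hz : z ∈ Metric.eball 0 r) : HasSum (fun m => u m * z ^ m) (f z) := by
  simpa only [FormalMultilinearSeries.ofScalars_apply_eq, smul_eq_mul, zero_add] using hf.hasSum hz

variable [CompleteSpace 𝕜]

lemma hasFPowerSeriesOnBall_deriv_ofScalars {x : 𝕜}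
    (hf : HasFPowerSeriesOnBall f (FormalMultilinearSeries.ofScalars 𝕜 u) x r) :
    HasFPowerSeriesOnBall (deriv f)
      (FormalMultilinearSeries.ofScalars 𝕜 fun m => ((m : 𝕜) + 1) * u (m + 1)) x r := by
  convert! (ContinuousLinearMap.apply 𝕜 𝕜 (1 : 𝕜)).comp_hasFPowerSeriesOnBall hf.fderiv using 1
  refine FormalMultilinearSeries.ext fun m => ContinuousMultilinearMap.ext_ring ?_
  calc (FormalMultilinearSeries.ofScalars 𝕜 fun m => ((m : 𝕜) + 1) * u (m + 1)).coeff m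
    _ = (m + 1) • u (m + 1) := by
      rw [FormalMultilinearSeries.coeff_ofScalars, nsmul_eq_mul, Nat.cast_succ]
    _ = (FormalMultilinearSeries.ofScalars 𝕜 u).derivSeries.coeff m 1 := by
      rw [FormalMultilinearSeries.derivSeries_coeff_one, FormalMultilinearSeries.coeff_ofScalars]

theorem hypergeometric_ode_of_coeff_recurrence {a b c : 𝕜}
    (hf : HasFPowerSeriesOnBall f (FormalMultilinearSeries.ofScalars 𝕜 u) 0 r)
    (hu : ∀ m : ℕ, ((m : 𝕜) + 1) * (c + m) * u (m + 1) = (a + m) * (b + m) * u m)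
    {z : 𝕜} (hz : z ∈ Metric.eball 0 r) :
    z * (1 - z) * deriv (deriv f) z + (c - (a + b + 1) * z) * deriv f z - a * b * f z = 0 := by
  have hf' := hasFPowerSeriesOnBall_deriv_ofScalars hf
  have sum_f := hasSum_of_hasFPowerSeriesOnBall_ofScalars hf hz
  have sum_f' := hasSum_of_hasFPowerSeriesOnBall_ofScalars hf' hz
  have sum_f'' := hasSum_of_hasFPowerSeriesOnBall_ofScalars
    (hasFPowerSeriesOnBall_deriv_ofScalars hf') hz
  have sum_zf' : HasSum (fun m : ℕ => m * u m * z ^ m) (z * deriv f z) := by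
    simpa using hasSum_mul_pow_of_succ (u := fun m : ℕ => m * u m) (by simpa using sum_f')
  have sum_zf'' : HasSum (fun m : ℕ => m * ((m + 1) * u (m + 1)) * z ^ m)
      (z * deriv (deriv f) z) := by
    simpa using hasSum_mul_pow_of_succ (u := fun m : ℕ => m * ((m + 1) * u (m + 1)))
      (by simpa using sum_f'')
  have sum_zzf'' : HasSum (fun m : ℕ => (m - 1) * (m * u m) * z ^ m)
      (z * (z * deriv (deriv f) z)) := by
    simpa using hasSum_mul_pow_of_succ (u := fun m : ℕ => (m - 1) * (m * u m))
      (by simpa using sum_zf'')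
  have sum_ode := (((sum_zf''.sub sum_zzf'').add (sum_f'.mul_left c)).sub
    (sum_zf'.mul_left (a + b + 1))).sub (sum_f.mul_left (a * b))
  have coeff_eq_zero : ∀ m : ℕ,
      m * ((m + 1) * u (m + 1)) * z ^ m - (m - 1) * (m * u m) * z ^ m
        + c * ((m + 1) * u (m + 1) * z ^ m) - (a + b + 1) * (m * u m * z ^ m)
        - a * b * (u m * z ^ m) = 0 :=
    fun m => by linear_combination z ^ m * hu m
  simp only [coeff_eq_zero] at sum_ode
  linear_combination sum_ode.unique hasSum_zero

end PowerSeries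

section OrdinaryHypergeometric

lemma ordinaryHypergeometric_symm {𝕂 𝔸 : Type*} [Field 𝕂] [Ring 𝔸] [Algebra 𝕂 𝔸]
    [TopologicalSpace 𝔸] [IsTopologicalRing 𝔸] (a b c : 𝕂) :
    (₂F₁ a b c : 𝔸 → 𝔸) = ₂F₁ b a c := by
  funext x
  rw [ordinaryHypergeometric, ordinaryHypergeometricSeries_symm, ← ordinaryHypergeometric]

lemma ordinaryHypergeometricCoefficient_succ {𝕂 : Type*} [Field 𝕂] [CharZero 𝕂] (a b : 𝕂) {c : 𝕂}
    {m : ℕ} (hc : c + m ≠ 0) :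
    ((m : 𝕂) + 1) * (c + m) * ordinaryHypergeometricCoefficient a b c (m + 1) =
      (a + m) * (b + m) * ordinaryHypergeometricCoefficient a b c m := by
  have hm : (m : 𝕂) + 1 ≠ 0 := Nat.cast_add_one_ne_zero m
  simp only [ordinaryHypergeometricCoefficient, ascPochhammer_succ_eval, Nat.factorial_succ,
    Nat.cast_mul, Nat.cast_succ, mul_inv]
  field_simp

variable {𝕂 : Type*} [RCLike 𝕂]

lemma one_le_radius_ordinaryHypergeometricSeries (𝔸 : Type*) [NormedDivisionRing 𝔸]
    [NormedAlgebra 𝕂 𝔸] (a b c : 𝕂) : 1 ≤ (ordinaryHypergeometricSeries 𝔸 a b c).radius := by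
  by_cases! h : ∀ k : ℕ, (k : 𝕂) ≠ -a ∧ (k : 𝕂) ≠ -b ∧ (k : 𝕂) ≠ -c
  · exact (ordinaryHypergeometricSeries_radius_eq_one 𝔸 a b c h).ge
  · obtain ⟨k, hk⟩ := h
    have hk' : (k : 𝕂) = -a ∨ (k : 𝕂) = -b ∨ (k : 𝕂) = -c := by tauto
    have hradius : (ordinaryHypergeometricSeries 𝔸 a b c).radius = ⊤ :=
      FormalMultilinearSeries.radius_eq_top_of_forall_image_add_eq_zero _ (k + 1) fun m =>
        ordinaryHypergeometricSeries_eq_zero_of_neg_nat a b c hk' (by lia)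
    exact hradius ▸ le_top

lemma hasFPowerSeriesOnBall_ordinaryHypergeometric (a b c : 𝕂) :
    HasFPowerSeriesOnBall (₂F₁ a b c) (ordinaryHypergeometricSeries 𝕂 a b c) 0 1 :=
  have hradius := one_le_radius_ordinaryHypergeometricSeries 𝕂 a b c
  ((ordinaryHypergeometricSeries 𝕂 a b c).hasFPowerSeriesOnBall
    (zero_lt_one.trans_le hradius)).mono zero_lt_one hradius

lemma analyticAt_ordinaryHypergeometric (a b c : 𝕂) {z : 𝕂} (hz : ‖z‖ < 1) :
    AnalyticAt 𝕂 (₂F₁ a b c) z :=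
  (hasFPowerSeriesOnBall_ordinaryHypergeometric a b c).analyticAt_of_mem
    (by simpa [← ofReal_norm] using hz)

theorem ordinaryHypergeometric_ode (a b : 𝕂) {c : 𝕂} (hc : ∀ m : ℕ, c + m ≠ 0) {z : 𝕂}
    (hz : ‖z‖ < 1) :
    z * (1 - z) * deriv (deriv (₂F₁ a b c)) z + (c - (a + b + 1) * z) * deriv (₂F₁ a b c) z
      - a * b * ₂F₁ a b c z = 0 :=
  hypergeometric_ode_of_coeff_recurrence (hasFPowerSeriesOnBall_ordinaryHypergeometric a b c)
    (fun m => ordinaryHypergeometricCoefficient_succ a b (hc m)) (by simpa [← ofReal_norm] using hz)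

open scoped ComplexConjugate

lemma conj_ascPochhammer_eval (a : 𝕂) (m : ℕ) :
    conj ((ascPochhammer 𝕂 m).eval a) = (ascPochhammer 𝕂 m).eval (conj a) := by
  rw [← Polynomial.eval_map_apply, ascPochhammer_map]

lemma conj_ordinaryHypergeometric (a b c z : 𝕂) :
    conj (₂F₁ a b c z) = ₂F₁ (conj a) (conj b) (conj c) (conj z) := by
  simp only [ordinaryHypergeometric_eq_tsum, RCLike.conj_tsum, smul_eq_mul, map_mul, map_inv₀,
    map_pow, map_natCast, conj_ascPochhammer_eval]

lemma ordinaryHypergeometric_add_sub_im_eq_zero (x c z : ℝ) {d : ℂ} (hd : (d ^ 2).im = 0) :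
    (₂F₁ ((x : ℂ) + d) ((x : ℂ) - d) (c : ℂ) (z : ℂ)).im = 0 := by
  have hconj : conj d = d ∨ conj d = -d :=
    sq_eq_sq_iff_eq_or_eq_neg.mp (by rw [← map_pow, conj_eq_iff_im, hd])
  rw [← conj_eq_iff_im, conj_ordinaryHypergeometric]
  simp only [map_add, map_sub, conj_ofReal]
  rcases hconj with h | h
  · rw [h]
  · rw [h, sub_neg_eq_add, ← sub_eq_add_neg, ordinaryHypergeometric_symm]

end OrdinaryHypergeometric

section SqrtWeight

lemma hasDerivAt_sqrt_one_sub_mul {g : ℝ → ℂ} {g' : ℂ} {z : ℝ} (hz : z < 1)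
    (hg : HasDerivAt g g' z) :
    HasDerivAt (fun y : ℝ => (√(1 - y) : ℂ) * g y)
      ((√(1 - z) : ℂ) * (g' - g z / (2 * (1 - (z : ℂ))))) z := by
  have hpos : 0 < 1 - z := sub_pos.mpr hz
  have hsqrt := ((hasDerivAt_id z).const_sub 1).sqrt hpos.ne'
  have hsq : (√(1 - z) : ℂ) ^ 2 = 1 - z := mod_cast Real.sq_sqrt hpos.le
  have hne : (√(1 - z) : ℂ) ≠ 0 := mod_cast (Real.sqrt_pos.mpr hpos).ne'
  convert! hsqrt.ofReal_comp.mul hg using 1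
  rw [← hsq]
  push_cast [id_eq]
  field_simp
  ring

theorem satisfiesRadialHGC_sqrt_one_sub_mul {n : ℕ} {τ : ℂ} {g g' g'' : ℝ → ℂ} {I : Set ℝ}
    (hI : IsOpen I) (hI_lt : I ⊆ Iio 1)
    (hg : ∀ z ∈ I, HasDerivAt g (g' z) z) (hg' : ∀ z ∈ I, HasDerivAt g' (g'' z) z)
    (hode : ∀ z ∈ I, (z : ℂ) * (1 - z) * g'' z + ((n : ℂ) / 2 - (n + 1) * z) * g' z
      - ((n : ℂ) ^ 2 / 4 - τ) * g z = 0) :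
    SatisfiesRadialHGC n τ (fun z => (√(1 - z) : ℂ) * g z) I := by
  intro z hz
  have hne : 1 - (z : ℂ) ≠ 0 := mod_cast (sub_pos.mpr (hI_lt hz)).ne'
  have hderiv : ∀ y ∈ I, deriv (fun z : ℝ => (√(1 - z) : ℂ) * g z) y =
      (√(1 - y) : ℂ) * (g' y - g y / (2 * (1 - (y : ℂ)))) :=
    fun y hy => (hasDerivAt_sqrt_one_sub_mul (hI_lt hy) (hg y hy)).deriv
  have hfactor : HasDerivAt (fun y : ℝ => g' y - g y / (2 * (1 - (y : ℂ))))
      (g'' z - (g' z / (2 * (1 - (z : ℂ))) + g z / (2 * (1 - (z : ℂ)) ^ 2))) z := by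
    have hden : HasDerivAt (fun y : ℝ => 2 * (1 - (y : ℂ))) (2 * -1) z :=
      ((hasDerivAt_id z).ofReal_comp.const_sub 1).const_mul 2
    convert! (hg' z hz).sub ((hg z hz).div hden (mul_ne_zero two_ne_zero hne)) using 2
    field_simp
    ring
  have hderiv2 := (Set.EqOn.eventuallyEq_of_mem hderiv (hI.mem_nhds hz)).deriv_eq.trans
    (hasDerivAt_sqrt_one_sub_mul (hI_lt hz) hfactor).deriv
  rw [hderiv2, hderiv z hz]
  calc _ = (√(1 - z) : ℂ) * (z * (1 - z) * g'' z + ((n : ℂ) / 2 - (n + 1) * z) * g' z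
      - ((n : ℂ) ^ 2 / 4 - τ) * g z) := by
        field_simp
        ring
    _ = 0 := by rw [hode z hz, mul_zero]

theorem satisfiesRadialHGC_sqrt_one_sub_mul_ordinaryHypergeometric {n : ℕ} (hn : n ≠ 0) {a b : ℂ}
    (hab : a + b = n) :
    SatisfiesRadialHGC n ((n : ℂ) ^ 2 / 4 - a * b)
      (fun z => (√(1 - z) : ℂ) * ₂F₁ a b ((n : ℂ) / 2) (z : ℂ)) (Ioo (-1) 1) := by
  have hc : ∀ m : ℕ, (n : ℂ) / 2 + m ≠ 0 := fun m => by
    have hreal : (n : ℝ) / 2 + m ≠ 0 := by positivity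
    simpa using ofReal_ne_zero.mpr hreal
  have hnorm : ∀ z ∈ Ioo (-1 : ℝ) 1, ‖(z : ℂ)‖ < 1 := fun z hz => by
    rw [norm_real, Real.norm_eq_abs]
    exact abs_lt.mpr hz
  have hf := fun z hz => analyticAt_ordinaryHypergeometric a b ((n : ℂ) / 2) (hnorm z hz)
  refine satisfiesRadialHGC_sqrt_one_sub_mul isOpen_Ioo Ioo_subset_Iio_self
    (fun z hz => (hf z hz).differentiableAt.hasDerivAt.comp_ofReal)
    (fun z hz => (hf z hz).deriv.differentiableAt.hasDerivAt.comp_ofReal) fun z hz => ?_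
  have hode := ordinaryHypergeometric_ode a b hc (hnorm z hz)
  rwa [hab, ← sub_sub_cancel ((n : ℂ) ^ 2 / 4) (a * b)] at hode

end SqrtWeight

theorem continuous_eigenfunction_general (n : ℕ) (hn : n ≠ 0) (σ : ℂ)
    (w : ℝ → ℂ)
    (hw : ∀ z : ℝ, w z = (√(1 - z) : ℂ) *
      ₂F₁ ((n : ℂ) / 2 + σ * Complex.I) ((n : ℂ) / 2 - σ * Complex.I) ((n : ℂ) / 2) (z : ℂ)) :
    SatisfiesRadialHGC n (-σ ^ 2) w (Ioo (-1) 1) ∧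
      ((σ ^ 2).im = 0 → ∀ z ∈ Ioo (-1 : ℝ) 1, (w z).im = 0) := by
  refine ⟨?_, fun hσ z _ => ?_⟩
  · have hτ : -σ ^ 2 = (n : ℂ) ^ 2 / 4 - ((n : ℂ) / 2 + σ * I) * ((n : ℂ) / 2 - σ * I) := by
      linear_combination -σ ^ 2 * I_sq
    rw [funext hw, hτ]
    exact satisfiesRadialHGC_sqrt_one_sub_mul_ordinaryHypergeometric hn (by ring)
  · have hd : ((σ * I) ^ 2).im = 0 := by rw [mul_pow, I_sq, mul_neg_one, neg_im, hσ, neg_zero]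
    have him := ordinaryHypergeometric_add_sub_im_eq_zero (n / 2) (n / 2) z hd
    push_cast at him
    rw [hw, im_ofReal_mul, him, mul_zero]

theorem continuous_eigenfunction (n : ℕ) (hn : 2 ≤ n) (σ : ℝ)
    (w : ℝ → ℂ)
    (hw : ∀ z : ℝ, w z = (Real.sqrt (1 - z) : ℂ) *
      ₂F₁ ((n : ℂ) / 2 + σ * Complex.I) ((n : ℂ) / 2 - σ * Complex.I) ((n : ℂ) / 2) (z : ℂ)) :
    SatisfiesRadialHGC n (-(σ : ℂ) ^ 2) w (Ioo (-1) 0) ∧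
      ∀ z ∈ Ioo (-1 : ℝ) 0, (w z).im = 0 := by
  obtain ⟨hode, hreal⟩ := continuous_eigenfunction_general n (by lia) σ w hw
  exact ⟨fun z hz => hode z ⟨hz.1, hz.2.trans zero_lt_one⟩,
    fun z hz => hreal (by norm_cast) z ⟨hz.1, hz.2.trans zero_lt_one⟩⟩
end

section
/- Let n ≥ 3 be an integer and s ∈ ℂ such that neither n/2 + s nor n/2 − s is a nonpositive integer. Then lim_{z → 0⁺} z^{n/2 − 1} · ₂F₁(n/2 + s, n/2 − s, n/2 + 1; 1 − z) = Γ(n/2 − 1)·Γ(n/2 + 1) / ( Γ(n/2 + s)·Γ(n/2 − s) ), where the limit is taken over real z decreasing to 0 and z^{n/2−1} is the real power. -/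
open Real Set Complex Filter Topology

/-!
Put `p = a + b - c` and `w_m(z) = z ^ p (p)_m / m! (1 - z) ^ m`. Then
`z ^ p ₂F₁(a, b; c; 1 - z) = ∑ w_m(z) r_m` with `r_m = (a)_m (b)_m / ((c)_m (p)_m)`. By the binomial
series the weights `w_m(z)` have total mass `1`; each of them vanishes as `z → 0⁺`, and their `ℓ¹`
norms stay bounded because `(p)_m = O((re p)_m)`. So by the Silverman–Toeplitz theorem
(`tendsto_tsum_smul`) the averages `∑ w_m(z) r_m` tend to `lim r_m`. As `a + b = p + c`, Euler's
limit formula gives `lim r_m = Γ(p) Γ(c) / (Γ(a) Γ(b))`.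
-/

section Toeplitz

variable {ι α 𝕜 E : Type*} [NormedField 𝕜] [NormedAddCommGroup E] [NormedSpace 𝕜 E] {C : ℝ}

lemma summable_smul_of_sum_norm_le [CompleteSpace E] {w : ι → 𝕜} {r : ι → E}
    (hw : ∀ F : Finset ι, ∑ i ∈ F, ‖w i‖ ≤ C) (hr : BddAbove (range fun i => ‖r i‖)) :
    Summable fun i => w i • r i := by
  obtain ⟨M, hM⟩ := hr
  have hnorm : Summable fun i => ‖w i‖ := summable_of_sum_le (fun i => norm_nonneg (w i)) hw
  refine .of_norm_bounded (hnorm.mul_right M) fun i => ?_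
  rw [norm_smul]
  exact mul_le_mul_of_nonneg_left (hM (mem_range_self i)) (norm_nonneg _)

lemma norm_tsum_smul_le {w : ι → 𝕜} {r : ι → E} {δ : ℝ} {F : Finset ι}
    (hs : Summable fun i => w i • r i) (hw : ∀ G : Finset ι, ∑ i ∈ G, ‖w i‖ ≤ C) (hδ : 0 ≤ δ)
    (hr : ∀ i ∉ F, ‖r i‖ ≤ δ) :
    ‖∑' i, w i • r i‖ ≤ ∑ i ∈ F, ‖w i‖ * ‖r i‖ + C * δ := by
  classical
  refine le_of_tendsto' hs.hasSum.norm fun G => ?_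
  have hin : ∑ i ∈ G ∩ F, ‖w i‖ * ‖r i‖ ≤ ∑ i ∈ F, ‖w i‖ * ‖r i‖ :=
    Finset.sum_le_sum_of_subset_of_nonneg Finset.inter_subset_right fun _ _ _ => by positivity
  have hout : ∑ i ∈ G \ F, ‖w i‖ * ‖r i‖ ≤ C * δ :=
    calc ∑ i ∈ G \ F, ‖w i‖ * ‖r i‖
      _ ≤ ∑ i ∈ G \ F, ‖w i‖ * δ := by
        gcongr with i hi
        exact hr i (Finset.mem_sdiff.1 hi).2
      _ = (∑ i ∈ G \ F, ‖w i‖) * δ := (Finset.sum_mul ..).symm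
      _ ≤ C * δ := mul_le_mul_of_nonneg_right (hw _) hδ
  calc ‖∑ i ∈ G, w i • r i‖
    _ ≤ ∑ i ∈ G, ‖w i‖ * ‖r i‖ := by simpa only [norm_smul] using norm_sum_le G fun i => w i • r i
    _ = ∑ i ∈ G ∩ F, ‖w i‖ * ‖r i‖ + ∑ i ∈ G \ F, ‖w i‖ * ‖r i‖ :=
      (Finset.sum_inter_add_sum_sdiff G F _).symm
    _ ≤ _ := add_le_add hin hout

variable [CompleteSpace E] {l : Filter α} {w : α → ι → 𝕜} {r : ι → E}

lemma tendsto_tsum_smul_zero (hw : ∀ᶠ z in l, ∀ F : Finset ι, ∑ i ∈ F, ‖w z i‖ ≤ C)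
    (h0 : ∀ i, Tendsto (fun z => w z i) l (𝓝 0)) (hr : Tendsto r cofinite (𝓝 0)) :
    Tendsto (fun z => ∑' i, w z i • r i) l (𝓝 0) := by
  rw [NormedAddGroup.tendsto_nhds_zero]
  intro ε hε
  obtain ⟨δ, hδ, hCδ⟩ := exists_pos_mul_lt (half_pos hε) C
  have hfin : {i | ¬‖r i‖ < δ}.Finite := NormedAddGroup.tendsto_nhds_zero.1 hr δ hδ
  have hhead : Tendsto (fun z => ∑ i ∈ hfin.toFinset, ‖w z i‖ * ‖r i‖) l (𝓝 0) := by
    simpa using tendsto_finsetSum hfin.toFinset fun i _ => (h0 i).norm.mul_const ‖r i‖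
  filter_upwards [hw, hhead.eventually_lt_const (half_pos hε)] with z hwz hhead_lt
  have hs := summable_smul_of_sum_norm_le hwz hr.norm.bddAbove_range_of_cofinite
  have htail : ∀ i ∉ hfin.toFinset, ‖r i‖ ≤ δ := fun i hi => by
    simpa using (not_not.1 (mt hfin.mem_toFinset.2 hi)).le
  linarith [norm_tsum_smul_le hs hwz hδ.le htail]

theorem tendsto_tsum_smul [CompleteSpace 𝕜] {L : E}
    (hw : ∀ᶠ z in l, ∀ F : Finset ι, ∑ i ∈ F, ‖w z i‖ ≤ C)
    (h0 : ∀ i, Tendsto (fun z => w z i) l (𝓝 0))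
    (h1 : Tendsto (fun z => ∑' i, w z i) l (𝓝 1)) (hr : Tendsto r cofinite (𝓝 L)) :
    Tendsto (fun z => ∑' i, w z i • r i) l (𝓝 L) := by
  have hr0 : Tendsto (fun i => r i - L) cofinite (𝓝 0) := tendsto_sub_nhds_zero_iff.2 hr
  have hlim := (tendsto_tsum_smul_zero hw h0 hr0).add (h1.smul_const L)
  rw [zero_add, one_smul] at hlim
  refine hlim.congr' ?_
  filter_upwards [hw] with z hwz
  have hs : Summable (w z) :=
    (summable_of_sum_le (fun i => norm_nonneg (w z i)) hwz).of_norm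
  have hs' := summable_smul_of_sum_norm_le hwz hr0.norm.bddAbove_range_of_cofinite
  rw [← hs.tsum_smul_const L, ← hs'.tsum_add (hs.smul_const L)]
  simp only [← smul_add, sub_add_cancel]

end Toeplitz

lemma ascPochhammer_eval_eq_prod_range {R : Type*} [CommSemiring R] (x : R) (m : ℕ) :
    (ascPochhammer R m).eval x = ∏ j ∈ Finset.range m, (x + j) := by
  induction m with
  | zero => simp
  | succ k ih => rw [ascPochhammer_succ_eval, ih, Finset.prod_range_succ]

lemma ascPochhammer_eval_ne_zero {R : Type*} [CommRing R] [IsDomain R] {x : R}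
    (hx : ∀ m : ℕ, x ≠ -m) (m : ℕ) : (ascPochhammer R m).eval x ≠ 0 := by
  rw [Ne, ascPochhammer_eval_eq_zero_iff]
  rintro ⟨k, -, hk⟩
  exact hx k (neg_eq_iff_eq_neg.1 hk.symm)

lemma ne_neg_natCast_of_re_pos {x : ℂ} (hx : 0 < x.re) (m : ℕ) : x ≠ -m := by
  rintro rfl
  rw [neg_re, natCast_re] at hx
  linarith [m.cast_nonneg (α := ℝ)]

lemma norm_one_sub_ofReal {x : ℝ} (hx : x ≤ 1) : ‖(1 : ℂ) - x‖ = 1 - x := by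
  rw [← ofReal_one, ← ofReal_sub, Complex.norm_of_nonneg (sub_nonneg.2 hx)]

lemma choose_add_natCast_sub_one {K : Type*} [Field K] [CharZero K] (x : K) (m : ℕ) :
    Ring.choose (x + m - 1) m = (ascPochhammer K m).eval x / m.factorial := by
  rw [← Ring.multichoose_eq, eq_div_iff (Nat.cast_ne_zero.2 m.factorial_ne_zero), mul_comm,
    ← nsmul_eq_mul, Ring.factorial_nsmul_multichoose_eq_ascPochhammer,
    Polynomial.ascPochhammer_smeval_eq_eval]

lemma complexGammaSeq_eq_div_ascPochhammer (x : ℂ) (m : ℕ) : Complex.GammaSeq x m =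
    (m : ℂ) ^ x * m.factorial / (ascPochhammer ℂ (m + 1)).eval x := by
  rw [Complex.GammaSeq, ascPochhammer_eval_eq_prod_range]

lemma realGammaSeq_eq_div_ascPochhammer (x : ℝ) (m : ℕ) : Real.GammaSeq x m =
    (m : ℝ) ^ x * m.factorial / (ascPochhammer ℝ (m + 1)).eval x := by
  rw [Real.GammaSeq, ascPochhammer_eval_eq_prod_range]

lemma tendsto_ascPochhammer_mul_div_mul {a b c d : ℂ} (ha : ∀ m : ℕ, a ≠ -m)
    (hb : ∀ m : ℕ, b ≠ -m) (hc : ∀ m : ℕ, c ≠ -m) (hd : ∀ m : ℕ, d ≠ -m) (h : a + b = c + d) :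
    Tendsto (fun m => (ascPochhammer ℂ m).eval a * (ascPochhammer ℂ m).eval b /
        ((ascPochhammer ℂ m).eval c * (ascPochhammer ℂ m).eval d)) atTop
      (𝓝 (Complex.Gamma c * Complex.Gamma d / (Complex.Gamma a * Complex.Gamma b))) := by
  rw [← tendsto_add_atTop_iff_nat 1]
  have hlim := ((Complex.GammaSeq_tendsto_Gamma c).mul (Complex.GammaSeq_tendsto_Gamma d)).div
    ((Complex.GammaSeq_tendsto_Gamma a).mul (Complex.GammaSeq_tendsto_Gamma b))
    (mul_ne_zero (Complex.Gamma_ne_zero ha) (Complex.Gamma_ne_zero hb))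
  refine hlim.congr' ?_
  filter_upwards [eventually_ne_atTop 0] with m hm
  have hm0 : (m : ℂ) ≠ 0 := Nat.cast_ne_zero.2 hm
  have hfact : (m.factorial : ℂ) ≠ 0 := Nat.cast_ne_zero.2 m.factorial_ne_zero
  have hpow : (m : ℂ) ^ a * (m : ℂ) ^ b = (m : ℂ) ^ c * (m : ℂ) ^ d := by
    rw [← cpow_add _ _ hm0, ← cpow_add _ _ hm0, h]
  have hpow0 (x : ℂ) : (m : ℂ) ^ x ≠ 0 := cpow_ne_zero_iff.2 (Or.inl hm0)
  have := hpow0 a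
  have := hpow0 b
  have := ascPochhammer_eval_ne_zero ha (m + 1)
  have := ascPochhammer_eval_ne_zero hb (m + 1)
  have := ascPochhammer_eval_ne_zero hc (m + 1)
  have := ascPochhammer_eval_ne_zero hd (m + 1)
  simp only [Pi.div_apply, complexGammaSeq_eq_div_ascPochhammer]
  field_simp
  exact hpow.symm

lemma tendsto_norm_ascPochhammer_div {p : ℂ} (hp : ∀ m : ℕ, p ≠ -m) :
    Tendsto (fun m => ‖(ascPochhammer ℂ m).eval p‖ / (ascPochhammer ℝ m).eval p.re) atTop
      (𝓝 (Real.Gamma p.re / ‖Complex.Gamma p‖)) := by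
  rw [← tendsto_add_atTop_iff_nat 1]
  have hlim := (Real.GammaSeq_tendsto_Gamma p.re).div (Complex.GammaSeq_tendsto_Gamma p).norm
    (norm_ne_zero_iff.2 (Complex.Gamma_ne_zero hp))
  refine hlim.congr' ?_
  filter_upwards [eventually_gt_atTop 0] with m hm
  have hpow : (m : ℝ) ^ p.re ≠ 0 := (rpow_pos_of_pos (Nat.cast_pos.2 hm) _).ne'
  have hfact : (m.factorial : ℝ) ≠ 0 := Nat.cast_ne_zero.2 m.factorial_ne_zero
  simp only [Pi.div_apply, complexGammaSeq_eq_div_ascPochhammer,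
    realGammaSeq_eq_div_ascPochhammer, norm_div, norm_mul, norm_natCast_cpow_of_pos hm,
    Complex.norm_natCast]
  rw [div_div_div_cancel_left' _ _ (mul_ne_zero hpow hfact)]

lemma exists_norm_ascPochhammer_le {p : ℂ} (hp : 0 < p.re) :
    ∃ K : ℝ, ∀ m, ‖(ascPochhammer ℂ m).eval p‖ ≤ K * (ascPochhammer ℝ m).eval p.re := by
  obtain ⟨K, hK⟩ :=
    (tendsto_norm_ascPochhammer_div (ne_neg_natCast_of_re_pos hp)).bddAbove_range
  exact ⟨K, fun m => (div_le_iff₀ (ascPochhammer_pos m _ hp)).1 (hK (mem_range_self m))⟩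

lemma hasSum_one_sub_cpow_neg (p : ℂ) {x : ℂ} (hx : ‖x‖ < 1) :
    HasSum (fun m : ℕ => (ascPochhammer ℂ m).eval p / m.factorial * x ^ m) ((1 - x) ^ (-p)) := by
  have hmem : x ∈ Metric.eball (0 : ℂ) 1 := by
    rwa [Metric.mem_eball, edist_zero_right, ← ofReal_norm, ENNReal.ofReal_lt_one]
  simpa only [FormalMultilinearSeries.ofScalars_apply_eq, choose_add_natCast_sub_one, smul_eq_mul,
    zero_add, one_div, ← cpow_neg] using
    (Complex.one_div_one_sub_cpow_hasFPowerSeriesOnBall_zero p).hasSum hmem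

lemma hasSum_one_sub_rpow_neg (p : ℝ) {x : ℝ} (hx : |x| < 1) :
    HasSum (fun m : ℕ => (ascPochhammer ℝ m).eval p / m.factorial * x ^ m) ((1 - x) ^ (-p)) := by
  have hmem : x ∈ Metric.eball (0 : ℝ) 1 := by
    rwa [Metric.mem_eball, edist_zero_right, ← ofReal_norm, ENNReal.ofReal_lt_one]
  have hx1 : 0 ≤ 1 - x := by linarith [(abs_lt.1 hx).2]
  simpa only [FormalMultilinearSeries.ofScalars_apply_eq, choose_add_natCast_sub_one, smul_eq_mul,
    zero_add, one_div, ← rpow_neg hx1] using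
    (Real.one_div_one_sub_rpow_hasFPowerSeriesOnBall_zero p).hasSum hmem

/-- The weight `z ^ p (p)_m / m! (1 - z) ^ m`. For real `p > 0` and `0 < z < 1` it is the
probability of `m` failures before the `p`-th success in the negative binomial law with success
probability `z`; it is used to write `z ^ p ₂F₁(a, b; c; 1 - z)` as a weighted mean. -/
noncomputable def negBinomialWeight (p z : ℂ) (m : ℕ) : ℂ :=
  z ^ p * ((ascPochhammer ℂ m).eval p / m.factorial * (1 - z) ^ m)

lemma hasSum_negBinomialWeight (p : ℂ) {z : ℂ} (hz : ‖1 - z‖ < 1) :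
    HasSum (negBinomialWeight p z) 1 := by
  have hz0 : z ≠ 0 := by
    rintro rfl
    simp at hz
  have h := (hasSum_one_sub_cpow_neg p hz).mul_left (z ^ p)
  rwa [sub_sub_cancel, ← cpow_add _ _ hz0, add_neg_cancel, cpow_zero] at h

lemma tendsto_negBinomialWeight_zero {p : ℂ} (hp : 0 < p.re) (m : ℕ) :
    Tendsto (fun z => negBinomialWeight p z m) (𝓝 0) (𝓝 0) := by
  have hcpow : ContinuousAt (fun z : ℂ => z ^ p) 0 :=
    continuousAt_cpow_const_of_re_pos (Or.inl le_rfl) hp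
  have hcont : ContinuousAt (fun z => negBinomialWeight p z m) 0 := hcpow.mul (by fun_prop)
  have hp0 : p ≠ 0 := fun h => hp.ne' (by rw [h, zero_re])
  simpa only [negBinomialWeight, zero_cpow hp0, zero_mul] using hcont.tendsto

lemma exists_sum_norm_negBinomialWeight_le {p : ℂ} (hp : 0 < p.re) :
    ∃ K : ℝ, ∀ z ∈ Ioo (0 : ℝ) 1, ∀ F : Finset ℕ, ∑ m ∈ F, ‖negBinomialWeight p z m‖ ≤ K := by
  obtain ⟨K, hK⟩ := exists_norm_ascPochhammer_le hp
  refine ⟨K, fun z ⟨hz0, hz1⟩ F => ?_⟩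
  have h1z : 0 ≤ 1 - z := sub_nonneg.2 hz1.le
  let v (m : ℕ) : ℝ := K * (z ^ p.re * ((ascPochhammer ℝ m).eval p.re / m.factorial * (1 - z) ^ m))
  have hv : HasSum v K := by
    have habs : |1 - z| < 1 := by rw [abs_of_nonneg h1z]; linarith
    have h := ((hasSum_one_sub_rpow_neg p.re habs).mul_left (z ^ p.re)).mul_left K
    rwa [sub_sub_cancel, ← rpow_add hz0, add_neg_cancel, rpow_zero, mul_one] at h
  have hle (m : ℕ) : ‖negBinomialWeight p z m‖ ≤ v m := by
    calc ‖negBinomialWeight p z m‖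
      _ = z ^ p.re * (‖(ascPochhammer ℂ m).eval p‖ / m.factorial * (1 - z) ^ m) := by
        rw [negBinomialWeight, norm_mul, norm_cpow_eq_rpow_re_of_pos hz0, norm_mul, norm_div,
          norm_pow, norm_one_sub_ofReal hz1.le, Complex.norm_natCast]
      _ ≤ z ^ p.re * (K * (ascPochhammer ℝ m).eval p.re / m.factorial * (1 - z) ^ m) := by
        gcongr
        exact hK m
      _ = v m := by ring
  calc ∑ m ∈ F, ‖negBinomialWeight p z m‖
    _ ≤ ∑ m ∈ F, v m := Finset.sum_le_sum fun m _ => hle m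
    _ ≤ K := sum_le_hasSum F (fun m _ => (norm_nonneg _).trans (hle m)) hv

lemma cpow_mul_ordinaryHypergeometric_one_sub (a b c : ℂ) {p : ℂ} (hp : ∀ m : ℕ, p ≠ -m) (z : ℂ) :
    z ^ p * ₂F₁ a b c (1 - z) =
      ∑' m, negBinomialWeight p z m • ((ascPochhammer ℂ m).eval a * (ascPochhammer ℂ m).eval b /
        ((ascPochhammer ℂ m).eval c * (ascPochhammer ℂ m).eval p)) := by
  rw [ordinaryHypergeometric_eq_tsum, ← tsum_mul_left]
  refine tsum_congr fun m => ?_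
  have := ascPochhammer_eval_ne_zero hp m
  rw [negBinomialWeight, smul_eq_mul, smul_eq_mul]
  field_simp

theorem connection_asymptotics_general {a b c : ℂ} (ha : ∀ m : ℕ, a ≠ -m) (hb : ∀ m : ℕ, b ≠ -m)
    (hc : ∀ m : ℕ, c ≠ -m) (hp : 0 < (a + b - c).re) :
    Tendsto (fun z : ℝ => (z : ℂ) ^ (a + b - c) * ₂F₁ a b c (1 - (z : ℂ))) (𝓝[>] 0)
      (𝓝 (Complex.Gamma (a + b - c) * Complex.Gamma c /
        (Complex.Gamma a * Complex.Gamma b))) := by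
  have hp_ne := ne_neg_natCast_of_re_pos hp
  have hcast : Tendsto (fun z : ℝ => (z : ℂ)) (𝓝[>] 0) (𝓝 0) :=
    (continuous_ofReal.tendsto' 0 0 ofReal_zero).mono_left nhdsWithin_le_nhds
  have hIoo : ∀ᶠ z in 𝓝[>] (0 : ℝ), z ∈ Ioo 0 1 := Ioo_mem_nhdsGT one_pos
  obtain ⟨K, hK⟩ := exists_sum_norm_negBinomialWeight_le hp
  have hmass : ∀ᶠ z : ℝ in 𝓝[>] 0, 1 = ∑' m, negBinomialWeight (a + b - c) z m := by
    filter_upwards [hIoo] with z ⟨hz0, hz1⟩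
    refine (hasSum_negBinomialWeight _ ?_).tsum_eq.symm
    rw [norm_one_sub_ofReal hz1.le]
    linarith
  have hratio := tendsto_ascPochhammer_mul_div_mul ha hb hc hp_ne (by ring)
  rw [← Nat.cofinite_eq_atTop, mul_comm (Complex.Gamma c)] at hratio
  simp only [cpow_mul_ordinaryHypergeometric_one_sub a b c hp_ne]
  exact tendsto_tsum_smul (hIoo.mono hK)
    (fun m => (tendsto_negBinomialWeight_zero hp m).comp hcast)
    (tendsto_const_nhds.congr' hmass) hratio

theorem connection_asymptotics (n : ℕ) (hn : 3 ≤ n) (s : ℂ)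
    (ha : ∀ m : ℕ, (n : ℂ) / 2 + s ≠ -(m : ℂ))
    (hb : ∀ m : ℕ, (n : ℂ) / 2 - s ≠ -(m : ℂ)) :
    Tendsto
      (fun z : ℝ => ((z ^ ((n : ℝ) / 2 - 1) : ℝ) : ℂ) *
        ₂F₁ ((n : ℂ) / 2 + s) ((n : ℂ) / 2 - s) ((n : ℂ) / 2 + 1) (((1 - z : ℝ)) : ℂ))
      (𝓝[>] (0 : ℝ))
      (𝓝 (Complex.Gamma ((n : ℂ) / 2 - 1) * Complex.Gamma ((n : ℂ) / 2 + 1) /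
        (Complex.Gamma ((n : ℂ) / 2 + s) * Complex.Gamma ((n : ℂ) / 2 - s)))) := by
  have hn' : (3 : ℝ) ≤ n := by exact_mod_cast hn
  have hexp : (n : ℂ) / 2 + s + (n / 2 - s) - (n / 2 + 1) = ((n / 2 - 1 : ℝ) : ℂ) := by
    push_cast
    ring
  have hexp_pos : 0 < ((n : ℂ) / 2 + s + (n / 2 - s) - (n / 2 + 1)).re := by
    rw [hexp, ofReal_re]
    linarith
  have hc : 0 < ((n : ℂ) / 2 + 1).re := by
    rw [add_re, div_ofNat_re, natCast_re, one_re]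
    positivity
  have h := connection_asymptotics_general ha hb (ne_neg_natCast_of_re_pos hc) hexp_pos
  rw [hexp] at h
  push_cast at h
  refine h.congr' ?_
  filter_upwards [self_mem_nhdsWithin] with z (hz : 0 < z)
  simp [ofReal_cpow hz.le]
end
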